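/- Let 1 ≤ q < ∞, p = 2q, α, β ∈ J_{2q}, and λ > 1. Then there exist constants c₁ > 0 (depending on q, α, β, λ) and c₂ > 0 (depending on q, α, β) such that for all 0 < δ < 1/4: c₁·δ^{1/q}·|ln δ|^{1/(2q)}·|ln|ln δ||^{−λ/(2q)} ≤ sup_{f ∈ B_{2q}^{α,β} ∩ M¹} ω_φ¹(f, δ)_{w_{α,β}, q} ≤ c₂·δ^{1/q}·|ln δ|^{1/(2q)}. -/

import Mathlib

open MeasureTheory Set Filter
open scoped ENNReal

noncomputable section

/-- The Jacobi weight `w_{α,β}(x) = (1+x)^α (1-x)^β`. -/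
def jacobi (α β : ℝ) (x : ℝ) : ℝ := (1 + x) ^ α * (1 - x) ^ β

/-- `φ(x) = √(1-x²)`. -/
def phiW (x : ℝ) : ℝ := Real.sqrt (1 - x ^ 2)

/-- The `L^p` norm of `g` on the interval `[a,b]` (essential sup when `p = ∞`). -/
def LpOn (g : ℝ → ℝ) (p : ℝ≥0∞) (a b : ℝ) : ℝ≥0∞ :=
  eLpNorm g p (volume.restrict (Icc a b))

/-- The `k`-th symmetric difference `Δ_h^k(f,x)` relative to `[-1,1]`. -/
def symmDelta (k : ℕ) (h : ℝ) (f : ℝ → ℝ) (x : ℝ) : ℝ :=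
  if (x - k * h / 2 ∈ Icc (-1 : ℝ) 1 ∧ x + k * h / 2 ∈ Icc (-1 : ℝ) 1) then
    ∑ i ∈ Finset.range (k + 1), ((k.choose i : ℝ) * (-1 : ℝ) ^ (k - i) * f (x - k * h / 2 + i * h))
  else 0

/-- Main-part weighted modulus `Ω_φ^k(f,δ)_{w,p}`. -/
def OmegaMain (k : ℕ) (f : ℝ → ℝ) (δ : ℝ) (wt : ℝ → ℝ) (p : ℝ≥0∞) : ℝ≥0∞ :=
  ⨆ h ∈ Ioc (0 : ℝ) δ,
    LpOn (fun x => wt x * symmDelta k (h * phiW x) f x) p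
      (-1 + 2 * (k : ℝ) ^ 2 * h ^ 2) (1 - 2 * (k : ℝ) ^ 2 * h ^ 2)

/-- Forward part `Ω→_φ^k(f,δ)_{w,p}`. -/
def OmegaFwd (k : ℕ) (f : ℝ → ℝ) (δ : ℝ) (wt : ℝ → ℝ) (p : ℝ≥0∞) : ℝ≥0∞ :=
  ⨆ h ∈ Ioc (0 : ℝ) (2 * (k : ℝ) ^ 2 * δ ^ 2),
    LpOn (fun x => wt x * symmDelta k h f (x + k * h / 2)) p
      (-1) (-1 + 2 * (k : ℝ) ^ 2 * δ ^ 2)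

/-- Backward part `Ω←_φ^k(f,δ)_{w,p}`. -/
def OmegaBwd (k : ℕ) (f : ℝ → ℝ) (δ : ℝ) (wt : ℝ → ℝ) (p : ℝ≥0∞) : ℝ≥0∞ :=
  ⨆ h ∈ Ioc (0 : ℝ) (2 * (k : ℝ) ^ 2 * δ ^ 2),
    LpOn (fun x => wt x * symmDelta k h f (x - k * h / 2)) p
      (1 - 2 * (k : ℝ) ^ 2 * δ ^ 2) 1

/-- Weighted Ditzian–Totik modulus `ω_φ^k(f,δ)_{w,p}`. -/
def omegaDT (k : ℕ) (f : ℝ → ℝ) (δ : ℝ) (wt : ℝ → ℝ) (p : ℝ≥0∞) : ℝ≥0∞ :=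
  OmegaMain k f δ wt p + OmegaFwd k f δ wt p + OmegaBwd k f δ wt p

/-- `f` is `k`-monotone on `(-1,1)`: all `k`-th divided differences over `k+1` distinct
points of `(-1,1)` are nonnegative. -/
def kMonotoneOn (k : ℕ) (f : ℝ → ℝ) : Prop :=
  ∀ x : Fin (k + 1) → ℝ, Function.Injective x → (∀ i, x i ∈ Ioo (-1 : ℝ) 1) →
    0 ≤ ∑ i, f (x i) / ∏ j ∈ Finset.univ.erase i, (x i - x j)

/-- `M^k`, the class of `k`-monotone functions on `(-1,1)`. -/
def MSet (k : ℕ) : Set (ℝ → ℝ) := {f | kMonotoneOn k f}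

/-- `M_+^k`, the `k`-monotone functions on `(-1,1)` vanishing on `(-1,0]`. -/
def MPlus (k : ℕ) : Set (ℝ → ℝ) :=
  {f | kMonotoneOn k f ∧ ∀ x : ℝ, -1 < x → x ≤ 0 → f x = 0}

/-- `J_p = (-1/p, ∞)` for finite `p`, `[0,∞)` for `p = ∞`. -/
def Jset (p : ℝ≥0∞) : Set ℝ := if p = ∞ then Ici 0 else Ioi (-1 / p.toReal)

/-- `W_p^{α,β}`. -/
def WSet (p : ℝ≥0∞) (α β : ℝ) : Set (ℝ → ℝ) :=
  {f | Measurable f ∧ LpOn (fun x => jacobi α β x * f x) p (-1) 1 ≠ ⊤}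

/-- `B_p^{α,β}`, the unit sphere of `W_p^{α,β}`. -/
def BSet (p : ℝ≥0∞) (α β : ℝ) : Set (ℝ → ℝ) :=
  {f | Measurable f ∧ LpOn (fun x => jacobi α β x * f x) p (-1) 1 = 1}

/-- Best weighted approximation `E_n(f)_{w,q}` by polynomials of degree at most `n`. -/
def En (n : ℕ) (f : ℝ → ℝ) (wt : ℝ → ℝ) (q : ℝ≥0∞) : ℝ≥0∞ :=
  ⨅ P ∈ {P : Polynomial ℝ | P.natDegree ≤ n},
    LpOn (fun x => wt x * (f x - P.eval x)) q (-1) 1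

/-- `E(X, P_n)_{w,q}`. -/
def EClass (X : Set (ℝ → ℝ)) (n : ℕ) (wt : ℝ → ℝ) (q : ℝ≥0∞) : ℝ≥0∞ :=
  ⨆ f ∈ X, En n f wt q


lemma kmono_iff {f : ℝ → ℝ} (hf : kMonotoneOn 1 f) : MonotoneOn f (Ioo (-1 : ℝ) 1) := by
  intro a ha b hb hab
  rcases hab.eq_or_lt with h | h
  · rw [h]
  have := hf ![a, b] (by
    intro i j hij
    fin_cases i <;> fin_cases j <;> simp_all) (by
    intro i; fin_cases i
    · simpa using ha
    · simpa using hb)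
  have e0 : (Finset.univ : Finset (Fin 2)).erase 0 = {1} := by decide
  have e1 : (Finset.univ : Finset (Fin 2)).erase 1 = {0} := by decide
  rw [Fin.sum_univ_two, e0, e1] at this
  simp only [Finset.prod_singleton, Matrix.cons_val_zero, Matrix.cons_val_one] at this
  have h2 : f a / (a - b) + f b / (b - a) = (f b - f a) / (b - a) := by
    have : b - a ≠ 0 := by linarith
    have : a - b ≠ 0 := by intro h; apply this; linarith
    field_simp
    ring
  rw [h2] at this
  by_contra hc
  push Not at hc
  have : (f b - f a) / (b - a) < 0 := div_neg_of_neg_of_pos (by linarith) (by linarith)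
  linarith

lemma kmono_of {f : ℝ → ℝ} (hf : Monotone f) : kMonotoneOn 1 f := by
  intro x hx _
  have e0 : (Finset.univ : Finset (Fin 2)).erase 0 = {1} := by decide
  have e1 : (Finset.univ : Finset (Fin 2)).erase 1 = {0} := by decide
  rw [Fin.sum_univ_two, e0, e1]
  simp only [Finset.prod_singleton]
  have hne : x 0 ≠ x 1 := fun h => by simpa using hx h
  rcases lt_or_gt_of_ne hne with h | h
  · have h2 : f (x 0) / (x 0 - x 1) + f (x 1) / (x 1 - x 0)
        = (f (x 1) - f (x 0)) / (x 1 - x 0) := by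
      have : x 1 - x 0 ≠ 0 := by linarith
      have : x 0 - x 1 ≠ 0 := by intro h; apply this; linarith
      field_simp
      ring
    rw [h2]
    exact div_nonneg (by linarith [hf h.le]) (by linarith)
  · have h2 : f (x 0) / (x 0 - x 1) + f (x 1) / (x 1 - x 0)
        = (f (x 0) - f (x 1)) / (x 0 - x 1) := by
      have : x 0 - x 1 ≠ 0 := by linarith
      have : x 1 - x 0 ≠ 0 := by intro h; apply this; linarith
      field_simp
      ring
    rw [h2]
    exact div_nonneg (by linarith [hf h.le]) (by linarith)

lemma symm1 (H : ℝ) (f : ℝ → ℝ) (x : ℝ) :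
    symmDelta 1 H f x = if (x - H / 2 ∈ Icc (-1 : ℝ) 1 ∧ x + H / 2 ∈ Icc (-1 : ℝ) 1) then
      f (x + H / 2) - f (x - H / 2) else 0 := by
  unfold symmDelta
  simp only [Finset.sum_range_succ, Finset.sum_range_zero]
  simp
  congr 1
  rw [show x - H / 2 + H = x + H / 2 by ring]; ring

lemma rpow_comp (s t β : ℝ) (hs : 0 < s) (h1 : s / 8 ≤ t) (h2 : t ≤ 8 * s) :
    (8 ^ |β|)⁻¹ * s ^ β ≤ t ^ β ∧ t ^ β ≤ 8 ^ |β| * s ^ β := by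
  have ht : 0 < t := by linarith
  have e1 : (8 * s) ^ β = 8 ^ β * s ^ β := Real.mul_rpow (by norm_num) hs.le
  have e2 : (s / 8) ^ β = (8 ^ β)⁻¹ * s ^ β := by
    rw [Real.div_rpow hs.le (by norm_num)]; ring
  rcases le_total 0 β with hb | hb
  · rw [abs_of_nonneg hb, ← e1, ← e2]
    exact ⟨Real.rpow_le_rpow (by linarith) h1 hb, Real.rpow_le_rpow ht.le h2 hb⟩
  · rw [abs_of_nonpos hb, Real.rpow_neg (by norm_num), inv_inv, ← e1, ← e2]
    exact ⟨Real.rpow_le_rpow_of_nonpos ht h2 hb,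
      Real.rpow_le_rpow_of_nonpos (by linarith) h1 hb⟩

def KK (α β : ℝ) : ℝ := 8 ^ |α| * 8 ^ |β|

lemma KK_pos (α β : ℝ) : 0 < KK α β := by unfold KK; positivity

lemma jac_comp (α β d x : ℝ) (hd : 0 < d) (h1 : 1 / 8 ≤ 1 + x) (h2 : 1 + x ≤ 8)
    (h3 : d / 8 ≤ 1 - x) (h4 : 1 - x ≤ 8 * d) :
    (KK α β)⁻¹ * d ^ β ≤ jacobi α β x ∧ jacobi α β x ≤ KK α β * d ^ β := by
  obtain ⟨a1, a2⟩ := rpow_comp 1 (1 + x) α one_pos h1 (by linarith)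
  obtain ⟨b1, b2⟩ := rpow_comp d (1 - x) β hd h3 h4
  rw [Real.one_rpow, mul_one] at a1 a2
  unfold KK jacobi
  constructor
  · rw [mul_inv, mul_assoc]
    exact mul_le_mul a1 b1 (by positivity) (Real.rpow_nonneg (by linarith) _)
  · rw [mul_assoc]
    exact mul_le_mul a2 b2 (Real.rpow_nonneg (by linarith) _) (by positivity)

lemma jac_nonneg (α β x : ℝ) (h1 : -1 ≤ x) (h2 : x ≤ 1) : 0 ≤ jacobi α β x := by
  unfold jacobi
  exact mul_nonneg (Real.rpow_nonneg (by linarith) _) (Real.rpow_nonneg (by linarith) _)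

lemma const_le {G : ℝ → ℝ≥0∞} {v a b : ℝ} {T : Set ℝ} (hv : 0 ≤ v)
    (hG : ∀ x ∈ Ico a b, ENNReal.ofReal v ≤ G x) (hT : Ico a b ⊆ T) :
    ENNReal.ofReal (v * (b - a)) ≤ ∫⁻ x in T, G x := by
  calc ENNReal.ofReal (v * (b - a)) = ENNReal.ofReal v * volume (Ico a b) := by
        rw [Real.volume_Ico, ENNReal.ofReal_mul hv]
    _ = ∫⁻ _ in Ico a b, ENNReal.ofReal v := by rw [setLIntegral_const]
    _ ≤ ∫⁻ x in Ico a b, G x := setLIntegral_mono' measurableSet_Ico hG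
    _ ≤ _ := lintegral_mono_set hT

lemma enorm_rpow (y s : ℝ) (hs : 0 ≤ s) : ‖y‖ₑ ^ s = ENNReal.ofReal (|y| ^ s) := by
  rw [Real.enorm_eq_ofReal_abs, ENNReal.ofReal_rpow_of_nonneg (abs_nonneg _) hs]

lemma scaleA (α β s d c : ℝ) (f : ℝ → ℝ) (hf : MonotoneOn f (Ioo (-1 : ℝ) 1)) (hs : 0 < s)
    (hd : 0 < d) (hd1 : d ≤ 1) (hc1 : 1 - 3 / 2 * d ≤ c) (hc2 : c ≤ 1 - d / 4) :
    ENNReal.ofReal (((KK α β)⁻¹ * d ^ β * |f c|) ^ s * (d / 8)) ≤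
      ∫⁻ x in Ico (1 - 2 * d) (1 - d / 8), ‖jacobi α β x * f x‖ₑ ^ s := by
  have hK := KK_pos α β
  have hcm : c ∈ Ioo (-1 : ℝ) 1 := ⟨by linarith, by linarith⟩
  have key : ∀ x, 1 - 7 / 4 * d ≤ x → x < 1 - d / 8 → |f c| ≤ |f x| →
      ENNReal.ofReal (((KK α β)⁻¹ * d ^ β * |f c|) ^ s) ≤ ‖jacobi α β x * f x‖ₑ ^ s := by
    intro x h1 h2 h3
    rw [enorm_rpow _ _ hs.le]
    apply ENNReal.ofReal_le_ofReal
    apply Real.rpow_le_rpow (by positivity) _ hs.le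
    rw [abs_mul, abs_of_nonneg (jac_nonneg _ _ _ (by linarith) (by linarith))]
    have := (jac_comp α β d x hd (by linarith) (by linarith) (by linarith) (by linarith)).1
    exact mul_le_mul this h3 (abs_nonneg _) (jac_nonneg _ _ _ (by linarith) (by linarith))
  rcases le_total 0 (f c) with h0 | h0
  · have : d / 8 = (1 - d / 8) - (1 - d / 4) := by ring
    rw [this]
    apply const_le (by positivity)
    · rintro x ⟨h1, h2⟩
      apply key x (by linarith) (by linarith)
      have := hf hcm (show x ∈ Ioo (-1 : ℝ) 1 from ⟨by linarith, by linarith⟩) (by linarith)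
      rw [abs_of_nonneg h0]
      exact this.trans (le_abs_self _)
    · apply Ico_subset_Ico <;> linarith
  · calc _ ≤ ENNReal.ofReal (((KK α β)⁻¹ * d ^ β * |f c|) ^ s * ((1 - 3/2 * d) - (1 - 7/4 * d))) := by
          apply ENNReal.ofReal_le_ofReal
          apply mul_le_mul_of_nonneg_left _ (by positivity)
          linarith
      _ ≤ _ := by
        apply const_le (by positivity)
        · rintro x ⟨h1, h2⟩
          apply key x (by linarith) (by linarith)
          have := hf (show x ∈ Ioo (-1 : ℝ) 1 from ⟨by linarith, by linarith⟩) hcm (by linarith)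
          rw [abs_of_nonpos h0, abs_of_nonpos (this.trans h0)]
          linarith
        · apply Ico_subset_Ico <;> linarith

lemma oscB (g : ℝ → ℝ) (hg : Monotone g) (S H a b : ℝ) (hS : ∀ x, |g x| ≤ S) (hH : 0 ≤ H)
    (hab : a ≤ b) :
    ∫⁻ x in Ico a b, ENNReal.ofReal (g (x + H) - g (x - H)) ≤ ENNReal.ofReal (4 * H * S) := by
  have hi : ∀ u v, IntervalIntegrable g volume u v := fun u v => hg.intervalIntegrable
  have hi1 : ∀ u v, IntervalIntegrable (fun x => g (x + H)) volume u v := fun u v =>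
    (hg.comp (fun x y h => by simpa using h : Monotone fun x : ℝ => x + H)).intervalIntegrable
  have hi2 : ∀ u v, IntervalIntegrable (fun x => g (x - H)) volume u v := fun u v =>
    (hg.comp (fun x y h => by simpa using h : Monotone fun x : ℝ => x - H)).intervalIntegrable
  have h0 : ∀ x, 0 ≤ g (x + H) - g (x - H) := fun x => by
    have := hg (show x - H ≤ x + H by linarith); linarith
  rw [setLIntegral_congr Ico_ae_eq_Ioc, ← ofReal_integral_eq_lintegral_ofReal]
  · apply ENNReal.ofReal_le_ofReal
    rw [← intervalIntegral.integral_of_le hab, intervalIntegral.integral_sub (hi1 _ _) (hi2 _ _),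
      intervalIntegral.integral_comp_add_right, intervalIntegral.integral_comp_sub_right,
      intervalIntegral.integral_interval_sub_interval_comm (hi _ _) (hi _ _) (hi _ _)]
    have b1 := intervalIntegral.norm_integral_le_of_norm_le_const (a := a + H) (b := a - H)
      (f := g) (C := S) (fun x _ => hS x)
    have b2 := intervalIntegral.norm_integral_le_of_norm_le_const (a := b + H) (b := b - H)
      (f := g) (C := S) (fun x _ => hS x)
    rw [show a - H - (a + H) = -(2 * H) by ring, abs_neg, abs_of_nonneg (by linarith)] at b1
    rw [show b - H - (b + H) = -(2 * H) by ring, abs_neg, abs_of_nonneg (by linarith)] at b2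
    rw [Real.norm_eq_abs, abs_le] at b1 b2
    linarith [b1.1, b1.2, b2.1, b2.2]
  · exact ((intervalIntegrable_iff_integrableOn_Ioc_of_le hab).1 ((hi1 a b).sub (hi2 a b)))
  · exact Eventually.of_forall h0

lemma phi_bound {h x : ℝ} (hh : 0 < h) (h1 : |x| ≤ 1 - 2 * h ^ 2) : h * phiW x ≤ 1 - |x| := by
  unfold phiW
  have h0 := abs_nonneg x
  have : h * √(1 - x ^ 2) = √(h ^ 2 * (1 - x ^ 2)) := by
    rw [Real.sqrt_mul (by positivity), Real.sqrt_sq hh.le]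
  rw [this]
  apply Real.sqrt_le_iff.2 ⟨by nlinarith, ?_⟩
  rw [← sq_abs x]
  nlinarith [mul_nonneg (show 0 ≤ 1 - |x| - 2 * h ^ 2 by linarith) (show 0 ≤ 1 - |x| by nlinarith), mul_nonneg (sq_nonneg h) (sq_nonneg (1 - |x|))]


def CC (α β r : ℝ) : ℝ := (KK α β) ^ r * 2 ^ (r - 1) * 4 * ((KK α β) ^ r * √8)

lemma CC_pos (α β r : ℝ) : 0 < CC α β r := by
  have := KK_pos α β
  unfold CC; positivity

lemma sqrt_scale (K dβ S r d : ℝ) (hK : 0 < K) (hdβ : 0 < dβ) (hS : 0 ≤ S) (hd : 0 < d) :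
    ((K⁻¹ * dβ * S) ^ (2 * r) * (d / 8)) ^ (1 / 2 : ℝ) =
      (K ^ r * √8)⁻¹ * ((dβ * S) ^ r * √d) := by
  rw [Real.mul_rpow (by positivity) (by positivity), ← Real.rpow_mul (by positivity),
    show 2 * r * (1 / 2) = r by ring, ← Real.sqrt_eq_rpow, Real.sqrt_div hd.le, mul_assoc,
    Real.mul_rpow (by positivity) (by positivity), Real.inv_rpow hK.le]
  field_simp

lemma scaleC (α β r d h : ℝ) (f : ℝ → ℝ) (hf : MonotoneOn f (Ioo (-1 : ℝ) 1)) (hr : 1 ≤ r)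
    (hd : 0 < d) (hd1 : d ≤ 1) (hh : 0 < h) :
    ∫⁻ x in Ico (1 - d) (1 - d / 2) ∩ Iic (1 - 2 * h ^ 2),
        ‖jacobi α β x * symmDelta 1 (h * phiW x) f x‖ₑ ^ r ≤
      ENNReal.ofReal (CC α β r * h) *
        (∫⁻ x in Ico (1 - 2 * d) (1 - d / 8), ‖jacobi α β x * f x‖ₑ ^ (2 * r)) ^ (1 / 2 : ℝ) := by
  have hK := KK_pos α β
  set K := KK α β with hKdef
  set a := 1 - 3 / 2 * d with ha
  set b := 1 - d / 4 with hb
  have hab : a ≤ b := by linarith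
  have ham : a ∈ Ioo (-1 : ℝ) 1 := ⟨by linarith, by linarith⟩
  have hbm : b ∈ Ioo (-1 : ℝ) 1 := ⟨by linarith, by linarith⟩
  obtain ⟨c, hc1, hc2, hca, hcb⟩ : ∃ c, a ≤ c ∧ c ≤ b ∧ |f a| ≤ |f c| ∧ |f b| ≤ |f c| := by
    rcases le_total (|f a|) (|f b|) with h | h
    · exact ⟨b, hab, le_rfl, h, le_rfl⟩
    · exact ⟨a, le_rfl, hab, le_rfl, h⟩
  set S := |f c| with hSdef
  have hS0 : 0 ≤ S := abs_nonneg _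
  set cl : ℝ → ℝ := fun x => max a (min b x) with hcl
  have hclm : Monotone cl := fun x y hxy => max_le_max le_rfl (min_le_min le_rfl hxy)
  have hcl1 : ∀ x, cl x ∈ Icc a b := fun x => ⟨le_max_left _ _, max_le hab (min_le_left _ _)⟩
  have hcl2 : ∀ x ∈ Icc a b, cl x = x := fun x hx => by
    simp [hcl, hx.1, hx.2]
  have hIcc : ∀ x ∈ Icc a b, x ∈ Ioo (-1 : ℝ) 1 := fun x hx =>
    ⟨lt_of_lt_of_le ham.1 hx.1, lt_of_le_of_lt hx.2 hbm.2⟩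
  set g : ℝ → ℝ := fun x => f (cl x) with hg
  have hgm : Monotone g := fun x y hxy => hf (hIcc _ (hcl1 x)) (hIcc _ (hcl1 y)) (hclm hxy)
  have hgS : ∀ x, |g x| ≤ S := fun x => by
    have h1 := hf ham (hIcc _ (hcl1 x)) (hcl1 x).1
    have h2 := hf (hIcc _ (hcl1 x)) hbm (hcl1 x).2
    rw [abs_le]
    constructor
    · linarith [neg_abs_le (f a)]
    · linarith [le_abs_self (f b)]
  have hdβ : 0 < d ^ β := by positivity
  set H := h * √d with hH
  have hH0 : 0 ≤ H := by positivity
  have point : ∀ x ∈ Ico (1 - d) (1 - d / 2) ∩ Iic (1 - 2 * h ^ 2),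
      ‖jacobi α β x * symmDelta 1 (h * phiW x) f x‖ₑ ^ r ≤
        ENNReal.ofReal ((K * d ^ β) ^ r * (2 * S) ^ (r - 1)) *
          ENNReal.ofReal (g (x + H) - g (x - H)) := by
    rintro x ⟨⟨hx1, hx2⟩, hx3⟩
    have hx0 : 0 ≤ x := by linarith
    have hp := phi_bound (x := x) hh (by rw [abs_of_nonneg hx0]; exact hx3)
    rw [abs_of_nonneg hx0] at hp
    have hphi0 : 0 ≤ phiW x := Real.sqrt_nonneg _
    have hhp : 0 ≤ h * phiW x := by positivity
    have m1 : x - h * phiW x / 2 ∈ Icc a b := ⟨by linarith, by linarith⟩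
    have m2 : x + h * phiW x / 2 ∈ Icc a b := ⟨by linarith, by linarith⟩
    have hle : h * phiW x / 2 ≤ H := by
      have : phiW x ≤ 2 * √d := by
        unfold phiW
        apply Real.sqrt_le_iff.2 ⟨by positivity, ?_⟩
        rw [mul_pow, Real.sq_sqrt hd.le]
        nlinarith
      nlinarith
    rw [symm1, if_pos ⟨⟨by linarith [m1.1], by linarith [m1.2]⟩,
      ⟨by linarith [m2.1], by linarith [m2.2]⟩⟩]
    have e1 : f (x + h * phiW x / 2) = g (x + h * phiW x / 2) := by rw [hg]; simp only; rw [hcl2 _ m2]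
    have e2 : f (x - h * phiW x / 2) = g (x - h * phiW x / 2) := by rw [hg]; simp only; rw [hcl2 _ m1]
    rw [e1, e2]
    set D := g (x + h * phiW x / 2) - g (x - h * phiW x / 2) with hD
    have hD0 : 0 ≤ D := by
      have := hgm (show x - h * phiW x / 2 ≤ x + h * phiW x / 2 by linarith); linarith
    have hD1 : D ≤ g (x + H) - g (x - H) := by
      have t1 := hgm (show x + h * phiW x / 2 ≤ x + H by linarith)
      have t2 := hgm (show x - H ≤ x - h * phiW x / 2 by linarith)
      linarith
    have hD2 : D ≤ 2 * S := by
      have t1 := abs_le.1 (hgS (x + h * phiW x / 2))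
      have t2 := abs_le.1 (hgS (x - h * phiW x / 2))
      linarith [t1.2, t2.1]
    have hw0 := jac_nonneg α β x (by linarith) (by linarith)
    have hw := (jac_comp α β d x hd (by linarith) (by linarith) (by linarith) (by linarith)).2
    rw [enorm_rpow _ _ (by linarith), ← ENNReal.ofReal_mul (by positivity)]
    apply ENNReal.ofReal_le_ofReal
    rw [abs_of_nonneg (by positivity), Real.mul_rpow hw0 hD0, mul_assoc]
    apply mul_le_mul (Real.rpow_le_rpow hw0 hw (by linarith)) _ (by positivity) (by positivity)
    calc D ^ r = D ^ (r - 1) * D := by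
          rw [← Real.rpow_add_one' hD0 (by linarith)]; congr 1; ring
      _ ≤ _ := mul_le_mul (Real.rpow_le_rpow hD0 hD2 (by linarith)) hD1 hD0 (by positivity)
  have hA := scaleA α β (2 * r) d c f hf (by linarith) hd hd1 hc1 hc2
  calc _ ≤ ∫⁻ x in Ico (1 - d) (1 - d / 2) ∩ Iic (1 - 2 * h ^ 2),
          ENNReal.ofReal ((K * d ^ β) ^ r * (2 * S) ^ (r - 1)) *
          ENNReal.ofReal (g (x + H) - g (x - H)) :=
        setLIntegral_mono' (measurableSet_Ico.inter measurableSet_Iic) point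
    _ ≤ ∫⁻ x in Ico (1 - d) (1 - d / 2),
          ENNReal.ofReal ((K * d ^ β) ^ r * (2 * S) ^ (r - 1)) *
          ENNReal.ofReal (g (x + H) - g (x - H)) := lintegral_mono_set inter_subset_left
    _ = ENNReal.ofReal ((K * d ^ β) ^ r * (2 * S) ^ (r - 1)) *
         ∫⁻ x in Ico (1 - d) (1 - d / 2), ENNReal.ofReal (g (x + H) - g (x - H)) := by
        rw [lintegral_const_mul' _ _ ENNReal.ofReal_ne_top]
    _ ≤ ENNReal.ofReal ((K * d ^ β) ^ r * (2 * S) ^ (r - 1)) * ENNReal.ofReal (4 * H * S) := by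
        gcongr
        exact oscB g hgm S H _ _ hgS hH0 (by linarith)
    _ = ENNReal.ofReal (CC α β r * h) * ENNReal.ofReal
          (((K⁻¹ * d ^ β * S) ^ (2 * r) * (d / 8)) ^ (1 / 2 : ℝ)) := by
        rw [← ENNReal.ofReal_mul (by positivity), ← ENNReal.ofReal_mul (by
          have := CC_pos α β r; positivity), sqrt_scale K (d ^ β) S r d hK hdβ hS0 hd]
        congr 1
        unfold CC
        rw [← hKdef, Real.mul_rpow hK.le hdβ.le, Real.mul_rpow hdβ.le hS0,
          Real.mul_rpow (by norm_num) hS0]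
        have : S ^ r = S ^ (r - 1) * S := by
          rw [← Real.rpow_add_one' hS0 (by linarith)]; congr 1; ring
        rw [this, hH]
        have h8 : √8 ≠ 0 := by positivity
        have hKr : K ^ r ≠ 0 := by positivity
        field_simp
    _ ≤ _ := by
        gcongr
        rw [← ENNReal.ofReal_rpow_of_nonneg (by positivity) (by norm_num)]
        exact ENNReal.rpow_le_rpow hA (by norm_num)

def uu (k : ℕ) : ℝ := 1 - 2 * (1 / 2) ^ k

lemma uu_mono : Monotone uu := fun a b h => by
  unfold uu
  have := pow_le_pow_of_le_one (by norm_num : (0:ℝ) ≤ 1 / 2) (by norm_num) h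
  linarith

lemma sum_disj {E : ℕ → Set ℝ} {T : Set ℝ} (hE : ∀ k, MeasurableSet (E k))
    (G : ℝ → ℝ≥0∞) (n : ℕ) (hsub : ∀ k < n, E k ⊆ Ico (uu k) (uu (k + 1)))
    (hT : ∀ k < n, E k ⊆ T) :
    ∑ k ∈ Finset.range n, ∫⁻ x in E k, G x ≤ ∫⁻ x in T, G x := by
  rw [← lintegral_biUnion_finset _ (fun k _ => hE k)]
  · apply lintegral_mono_set
    apply iUnion₂_subset
    intro k hk
    exact hT k (Finset.mem_range.1 hk)
  · intro i hi j hj hij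
    exact (uu_mono.pairwise_disjoint_on_Ico_succ hij).mono (hsub i (by simpa using hi))
      (hsub j (by simpa using hj))

lemma sumA (G : ℝ → ℝ≥0∞) (n : ℕ) :
    ∑ j ∈ Finset.range n, ∫⁻ x in Ico (1 - 2 * (1 / 2 : ℝ) ^ j) (1 - (1 / 2 : ℝ) ^ j / 8), G x ≤
      4 * ∫⁻ x in Icc (-1 : ℝ) 1, G x := by
  set D : ℕ → ℝ≥0∞ := fun k => ∫⁻ x in Ico (uu k) (uu (k + 1)), G x with hD
  have hu : ∀ k, uu k = 1 - 2 * (1 / 2) ^ k := fun k => rfl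
  have h1 : ∀ m : ℕ, ∑ j ∈ Finset.range n, D (j + m) ≤ ∫⁻ x in Icc (-1 : ℝ) 1, G x := by
    intro m
    calc ∑ j ∈ Finset.range n, D (j + m) ≤ ∑ k ∈ Finset.range (n + m), D k := by
          rw [add_comm n m, Finset.sum_range_add]
          simp only [add_comm _ m]
          exact le_add_self
      _ ≤ _ := by
        apply sum_disj (fun k => measurableSet_Ico) _ _ (fun k _ => le_rfl)
        intro k _ x hx
        have h0 := uu_mono (Nat.zero_le k)
        have h2 : uu (k + 1) ≤ 1 := by unfold uu; linarith [show (0:ℝ) < (1/2)^(k+1) by positivity]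
        have h3 : uu 0 = -1 := by unfold uu; norm_num
        exact ⟨by linarith [hx.1], by linarith [hx.2]⟩
  have h2 : ∀ j : ℕ, ∫⁻ x in Ico (1 - 2 * (1 / 2 : ℝ) ^ j) (1 - (1 / 2 : ℝ) ^ j / 8), G x ≤
      D j + D (j + 1) + D (j + 2) + D (j + 3) := by
    intro j
    have e : Ico (1 - 2 * (1 / 2 : ℝ) ^ j) (1 - (1 / 2 : ℝ) ^ j / 8) = Ico (uu j) (uu (j + 4)) := by
      rw [hu, hu]; congr 1; rw [pow_add]; ring
    rw [e]
    have hs : Ico (uu j) (uu (j + 4)) ⊆ ((Ico (uu j) (uu (j + 1)) ∪ Ico (uu (j + 1)) (uu (j + 2))) ∪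
        Ico (uu (j + 2)) (uu (j + 3))) ∪ Ico (uu (j + 3)) (uu (j + 4)) := by
      intro x hx
      simp only [mem_union, mem_Ico] at hx ⊢
      grind
    refine (lintegral_mono_set hs).trans ((lintegral_union_le _ _ _).trans ?_)
    gcongr
    refine (lintegral_union_le _ _ _).trans ?_
    gcongr
    exact lintegral_union_le _ _ _
  calc _ ≤ ∑ j ∈ Finset.range n, (D j + D (j + 1) + D (j + 2) + D (j + 3)) :=
        Finset.sum_le_sum (fun j _ => h2 j)
    _ ≤ _ := by
      simp only [Finset.sum_add_distrib]
      have := add_le_add (add_le_add (add_le_add (h1 0) (h1 1)) (h1 2)) (h1 3)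
      refine this.trans (le_of_eq ?_)
      ring

lemma lint_biU_le (s : Finset ℕ) (E : ℕ → Set ℝ) (G : ℝ → ℝ≥0∞) :
    ∫⁻ x in ⋃ j ∈ s, E j, G x ≤ ∑ j ∈ s, ∫⁻ x in E j, G x := by
  induction s using Finset.induction_on with
  | empty => simp
  | insert a s ha ih =>
    rw [Finset.sum_insert ha, Finset.set_biUnion_insert]
    exact (lintegral_union_le _ _ _).trans (by gcongr)

lemma mainRight (α β r h : ℝ) (f : ℝ → ℝ) (hf : MonotoneOn f (Ioo (-1 : ℝ) 1)) (hr : 1 ≤ r)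
    (hh : 0 < h) (hh4 : h < 1 / 4)
    (hn : ∫⁻ x in Icc (-1 : ℝ) 1, ‖jacobi α β x * f x‖ₑ ^ (2 * r) = 1) :
    ∫⁻ x in Icc 0 (1 - 2 * h ^ 2), ‖jacobi α β x * symmDelta 1 (h * phiW x) f x‖ₑ ^ r ≤
      ENNReal.ofReal (CC α β r * h * (16 * |Real.log h|) ^ (1 / 2 : ℝ)) := by
  obtain ⟨n, hn1, hn2⟩ := exists_nat_pow_near_of_lt_one (x := 2 * h ^ 2) (y := 1 / 2)
    (by positivity) (by nlinarith) (by norm_num) (by norm_num)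
  have hcover : Icc 0 (1 - 2 * h ^ 2) ⊆ ⋃ j ∈ Finset.range (n + 1),
      Ico (1 - (1 / 2 : ℝ) ^ j) (1 - (1 / 2 : ℝ) ^ j / 2) ∩ Iic (1 - 2 * h ^ 2) := by
    rintro x ⟨hx0, hx1⟩
    have hh2 : 0 < h ^ 2 := by positivity
    obtain ⟨j, hj1, hj2⟩ := exists_nat_pow_near_of_lt_one (x := 1 - x) (y := 1 / 2)
      (by linarith) (by linarith) (by norm_num) (by norm_num)
    simp only [mem_iUnion, Finset.mem_range]
    refine ⟨j, ?_, ⟨by linarith, ?_⟩, hx1⟩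
    · by_contra hc
      push Not at hc
      have := pow_le_pow_of_le_one (by norm_num : (0:ℝ) ≤ 1 / 2) (by norm_num) hc
      linarith
    · rw [pow_succ] at hj1; linarith
  have hlog : Real.log h ≤ -1.38 := by
    have : Real.log h ≤ Real.log (1/4) := Real.log_le_log hh hh4.le
    rw [show (1/4:ℝ) = (2^2)⁻¹ by norm_num, Real.log_inv, Real.log_pow] at this
    have := Real.log_two_gt_d9
    push_cast at *
    linarith
  have hcard : ((n + 1 : ℕ) : ℝ) ≤ 4 * |Real.log h| := by
    have h1 := Real.log_le_log (by positivity) hn2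
    rw [Real.log_mul (by norm_num) (by positivity), Real.log_pow, Real.log_pow, one_div,
      Real.log_inv] at h1
    have := Real.log_two_gt_d9
    rw [abs_of_nonpos (by linarith)]
    push_cast at *
    nlinarith
  set A : ℕ → ℝ≥0∞ := fun j => ∫⁻ x in Ico (1 - 2 * (1 / 2 : ℝ) ^ j) (1 - (1 / 2 : ℝ) ^ j / 8),
    ‖jacobi α β x * f x‖ₑ ^ (2 * r) with hA
  have hsum : ∑ j ∈ Finset.range (n + 1), A j ≤ 4 := by
    have := sumA (fun x => ‖jacobi α β x * f x‖ₑ ^ (2 * r)) (n + 1)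
    rwa [hn, mul_one] at this
  have hCS : ∑ j ∈ Finset.range (n + 1), (A j) ^ (1 / 2 : ℝ) ≤
      ENNReal.ofReal ((16 * |Real.log h|) ^ (1 / 2 : ℝ)) := by
    have := ENNReal.rpow_sum_le_const_mul_sum_rpow (s := Finset.range (n + 1))
      (f := fun j => (A j) ^ (1 / 2 : ℝ)) (p := 2) (by norm_num)
    simp only [← ENNReal.rpow_mul] at this
    norm_num at this
    have h2 : (∑ j ∈ Finset.range (n + 1), (A j) ^ (1 / 2 : ℝ)) ^ (2:ℝ) ≤
        ENNReal.ofReal (16 * |Real.log h|) := by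
      rw [ENNReal.rpow_ofNat]
      refine this.trans ?_
      calc ((n:ℝ≥0∞) + 1) * ∑ j ∈ Finset.range (n + 1), A j ≤ ENNReal.ofReal (4 * |Real.log h|) * 4 := by
            gcongr
            rw [← ENNReal.ofReal_natCast, ← ENNReal.ofReal_one, ← ENNReal.ofReal_add (by positivity) (by norm_num)]
            apply ENNReal.ofReal_le_ofReal
            exact_mod_cast hcard
        _ = _ := by
            rw [show (4:ℝ≥0∞) = ENNReal.ofReal 4 by norm_num, ← ENNReal.ofReal_mul (by positivity)]
            congr 1; ring
    rw [← ENNReal.ofReal_rpow_of_nonneg (by positivity) (by norm_num)]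
    have h3 := ENNReal.rpow_le_rpow h2 (show (0:ℝ) ≤ 1 / 2 by norm_num)
    rw [← ENNReal.rpow_mul] at h3
    norm_num at h3 ⊢
    exact h3
  have hC := CC_pos α β r
  calc _ ≤ ∫⁻ x in ⋃ j ∈ Finset.range (n + 1),
      Ico (1 - (1 / 2 : ℝ) ^ j) (1 - (1 / 2 : ℝ) ^ j / 2) ∩ Iic (1 - 2 * h ^ 2),
        ‖jacobi α β x * symmDelta 1 (h * phiW x) f x‖ₑ ^ r := lintegral_mono_set hcover
    _ ≤ ∑ j ∈ Finset.range (n + 1), ∫⁻ x in 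
      Ico (1 - (1 / 2 : ℝ) ^ j) (1 - (1 / 2 : ℝ) ^ j / 2) ∩ Iic (1 - 2 * h ^ 2),
        ‖jacobi α β x * symmDelta 1 (h * phiW x) f x‖ₑ ^ r := lint_biU_le _ _ _
    _ ≤ ∑ j ∈ Finset.range (n + 1), ENNReal.ofReal (CC α β r * h) * (A j) ^ (1 / 2 : ℝ) := by
        apply Finset.sum_le_sum
        intro j _
        exact scaleC α β r _ h f hf hr (by positivity) (pow_le_one₀ (by norm_num) (by norm_num)) hh
    _ = ENNReal.ofReal (CC α β r * h) * ∑ j ∈ Finset.range (n + 1), (A j) ^ (1 / 2 : ℝ) := by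
        rw [Finset.mul_sum]
    _ ≤ ENNReal.ofReal (CC α β r * h) * ENNReal.ofReal ((16 * |Real.log h|) ^ (1 / 2 : ℝ)) := by
        gcongr
    _ = _ := by rw [← ENNReal.ofReal_mul (by positivity)]


lemma lint_pow (s e : ℝ) (hs : -1 < s) (he : 0 ≤ e) :
    ∫⁻ x in Ico (1 - e) 1, ENNReal.ofReal ((1 - x) ^ s) = ENNReal.ofReal (e ^ (s + 1) / (s + 1)) := by
  have hi : IntervalIntegrable (fun x : ℝ => (1 - x) ^ s) volume (1 - e) 1 := by
    have := (intervalIntegral.intervalIntegrable_rpow' (a := e) (b := 0) hs).comp_sub_left 1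
    simpa using this
  rw [setLIntegral_congr Ico_ae_eq_Ioc, ← ofReal_integral_eq_lintegral_ofReal]
  · rw [← intervalIntegral.integral_of_le (by linarith),
      intervalIntegral.integral_comp_sub_left (fun x => x ^ s)]
    rw [integral_rpow (Or.inl hs)]
    simp [Real.zero_rpow (show s + 1 ≠ 0 by linarith)]
  · exact (intervalIntegrable_iff_integrableOn_Ioc_of_le (by linarith)).1 hi
  · filter_upwards [ae_restrict_mem measurableSet_Ioc] with x hx
    exact Real.rpow_nonneg (by linarith [hx.2]) _

lemma jac_meas (α β : ℝ) : Measurable (jacobi α β) := by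
  unfold jacobi; fun_prop

def C3 (α β r : ℝ) : ℝ :=
  2 ^ (r - 1) * (√2 + (8 ^ |α|) ^ r * (KK α β ^ r * √8) * 2 / (β * r + 1))

lemma C3_pos (α β r : ℝ) (hr : 1 ≤ r) (hβ : -1 / (2 * r) < β) : 0 < C3 α β r := by
  have hK := KK_pos α β
  have : -1 / 2 < β * r := by
    have h := mul_lt_mul_of_pos_right hβ (show 0 < r by linarith)
    have : -1 / (2 * r) * r = -1 / 2 := by field_simp
    linarith
  unfold C3
  have : 0 < β * r + 1 := by linarith
  positivity

lemma bwdBound (α β r δ h : ℝ) (f : ℝ → ℝ) (hfm : Measurable f)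
    (hf : MonotoneOn f (Ioo (-1 : ℝ) 1)) (hr : 1 ≤ r) (hβ : -1 / (2 * r) < β)
    (hδ : 0 < δ) (hδ4 : δ < 1 / 4) (hh : 0 < h) (hhδ : h ≤ 2 * δ ^ 2)
    (hn : ∫⁻ x in Icc (-1 : ℝ) 1, ‖jacobi α β x * f x‖ₑ ^ (2 * r) = 1) :
    ∫⁻ x in Icc (1 - 2 * δ ^ 2) 1, ‖jacobi α β x * symmDelta 1 h f (x - h / 2)‖ₑ ^ r ≤
      ENNReal.ofReal (C3 α β r * δ) := by
  have hK := KK_pos α β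
  have hβr : -1 / 2 < β * r := by
    have h := mul_lt_mul_of_pos_right hβ (show 0 < r by linarith)
    have : -1 / (2 * r) * r = -1 / 2 := by field_simp
    linarith
  set d := 4 * δ ^ 2 with hd
  have hd0 : 0 < d := by positivity
  have hd1 : d ≤ 1 / 4 := by rw [hd]; nlinarith
  set S := |f (1 - d)| with hS
  have hS0 : 0 ≤ S := abs_nonneg _
  have e1 : 1 - 2 * δ ^ 2 = 1 - d / 2 := by rw [hd]; ring
  have hsd : √d = 2 * δ := by
    rw [hd, show 4 * δ ^ 2 = (2 * δ) ^ 2 by ring, Real.sqrt_sq (by positivity)]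
  have hSb : (d ^ β * S) ^ r * √d ≤ KK α β ^ r * √8 := by
    have hA := scaleA α β (2 * r) d (1 - d) f hf (by linarith) hd0 (by linarith) (by linarith)
      (by linarith)
    have h2 : ∫⁻ x in Ico (1 - 2 * d) (1 - d / 8), ‖jacobi α β x * f x‖ₑ ^ (2 * r) ≤ 1 := by
      rw [← hn]
      exact lintegral_mono_set (fun x hx => ⟨by linarith [hx.1], by linarith [hx.2]⟩)
    have h3 := ENNReal.ofReal_le_one.1 (hA.trans h2)
    have h4 := Real.rpow_le_one (by positivity) h3 (show (0:ℝ) ≤ 1 / 2 by norm_num)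
    rw [sqrt_scale _ _ _ _ _ hK (by positivity) (abs_nonneg _) hd0] at h4
    rw [inv_mul_le_iff₀ (by positivity), mul_one] at h4
    exact h4
  have point : ∀ x ∈ Ico (1 - d / 2) 1, ‖jacobi α β x * symmDelta 1 h f (x - h / 2)‖ₑ ^ r ≤
      2 ^ (r - 1) * (‖jacobi α β x * f x‖ₑ ^ r +
        ENNReal.ofReal ((8 ^ |α| * S) ^ r) * ENNReal.ofReal ((1 - x) ^ (β * r))) := by
    rintro x ⟨hx1, hx2⟩
    have hhd : h ≤ d / 2 := by rw [hd]; linarith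
    rw [symm1, if_pos ⟨⟨by linarith, by linarith⟩, ⟨by linarith, by linarith⟩⟩,
      show x - h / 2 + h / 2 = x by ring, show x - h / 2 - h / 2 = x - h by ring]
    have hw0 := jac_nonneg α β x (by linarith) (by linarith)
    have hxm : x ∈ Ioo (-1 : ℝ) 1 := ⟨by linarith, by linarith⟩
    have hxm2 : x - h ∈ Ioo (-1 : ℝ) 1 := ⟨by linarith, by linarith⟩
    have hdm : 1 - d ∈ Ioo (-1 : ℝ) 1 := ⟨by linarith, by linarith⟩
    have m1 := hf hxm2 hxm (by linarith)
    have m2 := hf hdm hxm2 (by linarith)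
    have hb : |f x - f (x - h)| ≤ |f x| + S := by
      rw [abs_of_nonneg (by linarith)]
      have := le_abs_self (f x)
      have := neg_abs_le (f (1 - d))
      linarith
    have t1 : ‖jacobi α β x * (f x - f (x - h))‖ₑ ≤
        ‖jacobi α β x * f x‖ₑ + ENNReal.ofReal (jacobi α β x * S) := by
      rw [Real.enorm_eq_ofReal_abs, Real.enorm_eq_ofReal_abs,
        ← ENNReal.ofReal_add (by positivity) (by positivity)]
      apply ENNReal.ofReal_le_ofReal
      rw [abs_mul, abs_mul, abs_of_nonneg hw0, ← mul_add]
      exact mul_le_mul_of_nonneg_left hb hw0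
    have t2 : ENNReal.ofReal (jacobi α β x * S) ^ r ≤
        ENNReal.ofReal ((8 ^ |α| * S) ^ r) * ENNReal.ofReal ((1 - x) ^ (β * r)) := by
      have hx0 : 0 ≤ 1 - x := by linarith
      rw [ENNReal.ofReal_rpow_of_nonneg (by positivity) (by linarith),
        ← ENNReal.ofReal_mul (by positivity), Real.rpow_mul hx0,
        ← Real.mul_rpow (by positivity) (by positivity)]
      apply ENNReal.ofReal_le_ofReal
      apply Real.rpow_le_rpow (by positivity) _ (by linarith)
      have := (rpow_comp 1 (1 + x) α one_pos (by linarith) (by linarith)).2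
      rw [Real.one_rpow, mul_one] at this
      unfold jacobi
      have h5 : 0 ≤ S * (1 - x) ^ β := by positivity
      nlinarith
    calc _ ≤ (‖jacobi α β x * f x‖ₑ + ENNReal.ofReal (jacobi α β x * S)) ^ r :=
          ENNReal.rpow_le_rpow t1 (by linarith)
      _ ≤ 2 ^ (r - 1) * (‖jacobi α β x * f x‖ₑ ^ r + ENNReal.ofReal (jacobi α β x * S) ^ r) :=
          ENNReal.rpow_add_le_mul_rpow_add_rpow _ _ hr
      _ ≤ _ := by gcongr
  have hmeas : Measurable fun x => ‖jacobi α β x * f x‖ₑ ^ r :=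
    (((jac_meas α β).mul hfm).enorm).pow_const r
  have hhol : ∫⁻ x in Ico (1 - d / 2) 1, ‖jacobi α β x * f x‖ₑ ^ r ≤ ENNReal.ofReal (√2 * δ) := by
    have := ENNReal.lintegral_mul_le_Lp_mul_Lq (volume.restrict (Ico (1 - d / 2) 1))
      (p := 2) (q := 2) (f := fun x => ‖jacobi α β x * f x‖ₑ ^ r) (g := fun _ => 1)
      Real.HolderConjugate.two_two hmeas.aemeasurable aemeasurable_const
    simp only [Pi.mul_apply, mul_one, ← ENNReal.rpow_mul, ENNReal.one_rpow] at this
    refine this.trans ?_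
    rw [mul_comm r 2]
    calc _ ≤ (1:ℝ≥0∞) ^ (1 / 2 : ℝ) * (∫⁻ _ in Ico (1 - d / 2) 1, 1) ^ (1 / 2 : ℝ) := by
          gcongr
          rw [← hn]
          exact lintegral_mono_set (fun x hx => ⟨by linarith [hx.1], by linarith [hx.2]⟩)
      _ = _ := by
          rw [ENNReal.one_rpow, one_mul, setLIntegral_const, one_mul, Real.volume_Ico,
            ENNReal.ofReal_rpow_of_nonneg (by linarith) (by norm_num), ← Real.sqrt_eq_rpow]
          congr 1
          rw [show 1 - (1 - d / 2) = 2 * δ ^ 2 by rw [hd]; ring, Real.sqrt_mul (by norm_num),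
            Real.sqrt_sq hδ.le]
  have htail : ENNReal.ofReal ((8 ^ |α| * S) ^ r) *
      ∫⁻ x in Ico (1 - d / 2) 1, ENNReal.ofReal ((1 - x) ^ (β * r)) ≤
      ENNReal.ofReal ((8 ^ |α|) ^ r * (KK α β ^ r * √8) * 2 / (β * r + 1) * δ) := by
    rw [lint_pow _ _ (by linarith) (by linarith), ← ENNReal.ofReal_mul (by positivity)]
    apply ENNReal.ofReal_le_ofReal
    have hp : 0 < β * r + 1 := by linarith
    have h1 : (d / 2) ^ (β * r + 1) ≤ (d ^ β) ^ r * (√d * √d) := by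
      rw [Real.mul_self_sqrt hd0.le, ← Real.rpow_mul hd0.le, ← Real.rpow_add_one hd0.ne']
      exact Real.rpow_le_rpow (by positivity) (by linarith) hp.le
    calc (8 ^ |α| * S) ^ r * ((d / 2) ^ (β * r + 1) / (β * r + 1))
        ≤ (8 ^ |α| * S) ^ r * (((d ^ β) ^ r * (√d * √d)) / (β * r + 1)) := by gcongr
      _ = (8 ^ |α|) ^ r * ((d ^ β * S) ^ r * √d) * √d / (β * r + 1) := by
          rw [Real.mul_rpow (by positivity) hS0, Real.mul_rpow (by positivity) hS0]; ring
      _ ≤ (8 ^ |α|) ^ r * (KK α β ^ r * √8) * √d / (β * r + 1) := by gcongr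
      _ = _ := by rw [hsd]; ring
  rw [setLIntegral_congr Ico_ae_eq_Icc.symm, e1]
  calc _ ≤ ∫⁻ x in Ico (1 - d / 2) 1, 2 ^ (r - 1) * (‖jacobi α β x * f x‖ₑ ^ r +
        ENNReal.ofReal ((8 ^ |α| * S) ^ r) * ENNReal.ofReal ((1 - x) ^ (β * r))) :=
        setLIntegral_mono' measurableSet_Ico point
    _ = 2 ^ (r - 1) * ((∫⁻ x in Ico (1 - d / 2) 1, ‖jacobi α β x * f x‖ₑ ^ r) +
        ENNReal.ofReal ((8 ^ |α| * S) ^ r) *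
          ∫⁻ x in Ico (1 - d / 2) 1, ENNReal.ofReal ((1 - x) ^ (β * r))) := by
        rw [lintegral_const_mul' _ _ (ENNReal.rpow_ne_top_of_nonneg (by linarith) (by norm_num)),
          lintegral_add_left hmeas, lintegral_const_mul' _ _ ENNReal.ofReal_ne_top]
    _ ≤ 2 ^ (r - 1) * (ENNReal.ofReal (√2 * δ) +
      ENNReal.ofReal ((8 ^ |α|) ^ r * (KK α β ^ r * √8) * 2 / (β * r + 1) * δ)) := by gcongr
    _ = _ := by
        have hp : 0 < β * r + 1 := by linarith
        rw [← ENNReal.ofReal_add (by positivity) (by positivity),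
          show (2:ℝ≥0∞) = ENNReal.ofReal 2 by norm_num,
          ENNReal.ofReal_rpow_of_pos (by norm_num), ← ENNReal.ofReal_mul (by positivity)]
        congr 1
        unfold C3
        ring

def mir (f : ℝ → ℝ) : ℝ → ℝ := fun x => -f (-x)

lemma jac_neg (α β x : ℝ) : jacobi α β (-x) = jacobi β α x := by
  unfold jacobi; rw [mul_comm]; ring_nf

lemma phi_neg (x : ℝ) : phiW (-x) = phiW x := by unfold phiW; simp

lemma symm_neg (H : ℝ) (f : ℝ → ℝ) (x : ℝ) : symmDelta 1 H f (-x) = symmDelta 1 H (mir f) x := by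
  rw [symm1, symm1]
  unfold mir
  simp only [mem_Icc]
  rw [show -(x + H / 2) = -x - H / 2 by ring, show -(x - H / 2) = -x + H / 2 by ring]
  by_cases h : (-1 ≤ x - H / 2 ∧ x - H / 2 ≤ 1) ∧ -1 ≤ x + H / 2 ∧ x + H / 2 ≤ 1
  · rw [if_pos h, if_pos ⟨⟨by linarith [h.2.2], by linarith [h.2.1]⟩,
      ⟨by linarith [h.1.2], by linarith [h.1.1]⟩⟩]; ring
  · rw [if_neg h, if_neg]
    intro h2
    exact h ⟨⟨by linarith [h2.2.2], by linarith [h2.2.1]⟩,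
      ⟨by linarith [h2.1.2], by linarith [h2.1.1]⟩⟩

lemma lint_neg (G : ℝ → ℝ≥0∞) (a b : ℝ) :
    ∫⁻ x in Icc a b, G x = ∫⁻ x in Icc (-b) (-a), G (-x) := by
  have := (Measure.measurePreserving_neg (volume : Measure ℝ)).setLIntegral_comp_preimage_emb
    (MeasurableEquiv.neg ℝ).measurableEmbedding G (Icc a b)
  rw [← this]
  simp

lemma mir_mono {f : ℝ → ℝ} (hf : MonotoneOn f (Ioo (-1 : ℝ) 1)) :
    MonotoneOn (mir f) (Ioo (-1 : ℝ) 1) := by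
  intro a ha b hb hab
  have := hf (a := -b) (b := -a) ⟨by linarith [hb.2], by linarith [hb.1]⟩
    ⟨by linarith [ha.2], by linarith [ha.1]⟩ (by linarith)
  unfold mir; linarith

lemma mir_norm (α β s : ℝ) (f : ℝ → ℝ) :
    ∫⁻ x in Icc (-1 : ℝ) 1, ‖jacobi β α x * mir f x‖ₑ ^ s =
    ∫⁻ x in Icc (-1 : ℝ) 1, ‖jacobi α β x * f x‖ₑ ^ s := by
  rw [lint_neg (fun x => ‖jacobi α β x * f x‖ₑ ^ s), neg_neg]
  simp only [jac_neg, mir, mul_neg, enorm_neg]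

lemma LpOn_le {q : ℝ≥0∞} (hq1 : 1 ≤ q) (hq2 : q ≠ ∞) {g : ℝ → ℝ} {a b C δ L : ℝ} (hC : 0 ≤ C)
    (hδ : 0 ≤ δ) (hL : 0 ≤ L)
    (h : ∫⁻ x in Icc a b, ‖g x‖ₑ ^ q.toReal ≤ ENNReal.ofReal (C * (δ * L ^ (1 / 2 : ℝ)))) :
    LpOn g q a b ≤ ENNReal.ofReal (C ^ (1 / q.toReal) *
      (δ ^ (1 / q.toReal) * L ^ (1 / (2 * q.toReal)))) := by
  have hq0 : q ≠ 0 := by rintro rfl; simp at hq1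
  have hr : 0 < q.toReal := ENNReal.toReal_pos hq0 hq2
  unfold LpOn
  rw [eLpNorm_eq_lintegral_rpow_enorm_toReal hq0 hq2]
  refine (ENNReal.rpow_le_rpow h (by positivity)).trans (le_of_eq ?_)
  rw [ENNReal.ofReal_rpow_of_nonneg (by positivity) (by positivity), Real.mul_rpow hC (by positivity),
    Real.mul_rpow hδ (by positivity), ← Real.rpow_mul hL]
  congr 4
  field_simp

lemma h_log {h δ : ℝ} (hh : 0 < h) (hhδ : h ≤ δ) (hδ4 : δ < 1 / 4) :
    1 ≤ |Real.log δ| ∧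
    h * (16 * |Real.log h|) ^ (1 / 2 : ℝ) ≤ 8 * (δ * |Real.log δ| ^ (1 / 2 : ℝ)) := by
  have hδ : 0 < δ := by linarith
  have hlog : Real.log δ ≤ -1.38 := by
    have : Real.log δ ≤ Real.log (1/4) := Real.log_le_log hδ hδ4.le
    rw [show (1/4:ℝ) = (2^2)⁻¹ by norm_num, Real.log_inv, Real.log_pow] at this
    have := Real.log_two_gt_d9
    push_cast at *
    linarith
  have hlh : Real.log h ≤ Real.log δ := Real.log_le_log hh hhδ
  have h1 : 1 ≤ |Real.log δ| := by rw [abs_of_nonpos (by linarith)]; linarith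
  refine ⟨h1, ?_⟩
  rw [← Real.sqrt_eq_rpow, ← Real.sqrt_eq_rpow]
  have e1 : h * √(16 * |Real.log h|) = √(h ^ 2 * (16 * |Real.log h|)) := by
    rw [Real.sqrt_mul (by positivity) (16 * _), Real.sqrt_sq hh.le]
  have e2 : 8 * (δ * √|Real.log δ|) = √((8 * δ) ^ 2 * |Real.log δ|) := by
    rw [Real.sqrt_mul (by positivity), Real.sqrt_sq (by positivity)]; ring
  rw [e1, e2]
  apply Real.sqrt_le_sqrt
  have h2 : Real.log δ - Real.log h ≤ δ / h := by
    rw [← Real.log_div hδ.ne' hh.ne']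
    linarith [Real.log_le_sub_one_of_pos (show 0 < δ / h by positivity)]
  have h3 : h ^ 2 * (Real.log δ - Real.log h) ≤ δ ^ 2 := by
    calc h ^ 2 * (Real.log δ - Real.log h) ≤ h ^ 2 * (δ / h) := by gcongr
      _ = h * δ := by field_simp
      _ ≤ _ := by nlinarith
  have h4 : h ^ 2 ≤ δ ^ 2 := by gcongr
  rw [abs_of_nonpos (by linarith), abs_of_nonpos (by linarith)]
  nlinarith

lemma upper (q : ℝ≥0∞) (hq1 : 1 ≤ q) (hq2 : q ≠ ∞) (α β : ℝ)
    (hα : -1 / (2 * q.toReal) < α) (hβ : -1 / (2 * q.toReal) < β) :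
    ∃ C > (0:ℝ), ∀ δ : ℝ, 0 < δ → δ < 1 / 4 → ∀ f : ℝ → ℝ, Measurable f →
      MonotoneOn f (Ioo (-1 : ℝ) 1) →
      ∫⁻ x in Icc (-1 : ℝ) 1, ‖jacobi α β x * f x‖ₑ ^ (2 * q.toReal) = 1 →
      omegaDT 1 f δ (jacobi α β) q ≤
        ENNReal.ofReal (C * δ ^ (1 / q.toReal) * |Real.log δ| ^ (1 / (2 * q.toReal))) := by
  set r := q.toReal with hrdef
  have hr : 1 ≤ r := by
    have := ENNReal.toReal_mono hq2 hq1
    simpa using this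
  have c1 := CC_pos α β r
  have c2 := CC_pos β α r
  have c3 := C3_pos α β r hr hβ
  have c4 := C3_pos β α r hr hα
  refine ⟨((CC β α r + CC α β r) * 8) ^ (1 / r) + C3 β α r ^ (1 / r) + C3 α β r ^ (1 / r),
    by positivity, ?_⟩
  intro δ hδ hδ4 f hfm hf hn
  have hn' := (mir_norm α β (2 * r) f).trans hn
  have hf' := mir_mono hf
  have hfm' : Measurable (mir f) := by unfold mir; fun_prop
  obtain ⟨hL1, -⟩ := h_log hδ le_rfl hδ4
  set L := |Real.log δ| with hL
  have hL12 : 1 ≤ L ^ (1 / 2 : ℝ) := Real.one_le_rpow hL1 (by norm_num)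
  have main : OmegaMain 1 f δ (jacobi α β) q ≤ ENNReal.ofReal (((CC β α r + CC α β r) * 8) ^ (1 / r) *
      (δ ^ (1 / r) * L ^ (1 / (2 * r)))) := by
    unfold OmegaMain
    simp only [Nat.cast_one, one_pow, mul_one]
    refine iSup₂_le ?_
    rintro h ⟨hh, hhδ⟩
    apply LpOn_le hq1 hq2 (by positivity) hδ.le (by positivity)
    have hb := (h_log hh hhδ hδ4).2
    have R := mainRight α β r h f hf hr hh (by linarith) hn
    have Lf := mainRight β α r h (mir f) hf' hr hh (by linarith) hn'
    have hLf : ∫⁻ x in Icc (-1 + 2 * h ^ 2) 0, ‖jacobi α β x * symmDelta 1 (h * phiW x) f x‖ₑ ^ r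
      = ∫⁻ x in Icc 0 (1 - 2 * h ^ 2),
        ‖jacobi β α x * symmDelta 1 (h * phiW x) (mir f) x‖ₑ ^ r := by
      rw [lint_neg, neg_zero, show -(-1 + 2 * h ^ 2) = 1 - 2 * h ^ 2 by ring]
      simp only [jac_neg, phi_neg, symm_neg]
    rw [← hLf] at Lf
    have hsub : Icc (-1 + 2 * h ^ 2) (1 - 2 * h ^ 2) ⊆
        Icc (-1 + 2 * h ^ 2) 0 ∪ Icc 0 (1 - 2 * h ^ 2) := by
      intro x hx
      rcases le_total x 0 with h0 | h0
      · exact Or.inl ⟨hx.1, h0⟩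
      · exact Or.inr ⟨h0, hx.2⟩
    refine (lintegral_mono_set hsub).trans ((lintegral_union_le _ _ _).trans ((add_le_add Lf R).trans ?_))
    rw [← ENNReal.ofReal_add (by positivity) (by positivity)]
    apply ENNReal.ofReal_le_ofReal
    calc _ = (CC β α r + CC α β r) * (h * (16 * |Real.log h|) ^ (1 / 2 : ℝ)) := by ring
      _ ≤ (CC β α r + CC α β r) * (8 * (δ * L ^ (1 / 2 : ℝ))) := by gcongr
      _ = _ := by ring
  have hδL : δ ≤ δ * L ^ (1 / 2 : ℝ) := le_mul_of_one_le_right hδ.le hL12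
  have bwd : OmegaBwd 1 f δ (jacobi α β) q ≤ ENNReal.ofReal (C3 α β r ^ (1 / r) *
      (δ ^ (1 / r) * L ^ (1 / (2 * r)))) := by
    unfold OmegaBwd
    simp only [Nat.cast_one, one_pow, mul_one, one_mul]
    refine iSup₂_le ?_
    rintro h ⟨hh, hhδ⟩
    apply LpOn_le hq1 hq2 (by positivity) hδ.le (by positivity)
    refine (bwdBound α β r δ h f hfm hf hr hβ hδ hδ4 hh hhδ hn).trans ?_
    apply ENNReal.ofReal_le_ofReal
    gcongr
  have fwd : OmegaFwd 1 f δ (jacobi α β) q ≤ ENNReal.ofReal (C3 β α r ^ (1 / r) *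
      (δ ^ (1 / r) * L ^ (1 / (2 * r)))) := by
    unfold OmegaFwd
    simp only [Nat.cast_one, one_pow, mul_one, one_mul]
    refine iSup₂_le ?_
    rintro h ⟨hh, hhδ⟩
    apply LpOn_le hq1 hq2 (by positivity) hδ.le (by positivity)
    have B := bwdBound β α r δ h (mir f) hfm' hf' hr hα hδ hδ4 hh hhδ hn'
    rw [lint_neg, neg_neg, show -(-1 + 2 * δ ^ 2) = 1 - 2 * δ ^ 2 by ring]
    have e : ∀ x, symmDelta 1 h f (-x + h / 2) = symmDelta 1 h (mir f) (x - h / 2) := by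
      intro x
      rw [← symm_neg]; congr 1; ring
    simp only [jac_neg, e]
    refine B.trans ?_
    apply ENNReal.ofReal_le_ofReal
    gcongr
  unfold omegaDT
  refine (add_le_add (add_le_add main fwd) bwd).trans (le_of_eq ?_)
  rw [← ENNReal.ofReal_add (by positivity) (by positivity),
    ← ENNReal.ofReal_add (by positivity) (by positivity)]
  congr 1
  ring


def f0 (R : ℝ) (n : ℕ) (x : ℝ) : ℝ :=
  ∑ j ∈ Finset.range n, R ^ j * (if 1 - (1 / 2 : ℝ) ^ j ≤ x then 1 else 0)

lemma f0_mono (R : ℝ) (hR : 1 < R) (n : ℕ) : Monotone (f0 R n) := by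
  intro x y hxy
  unfold f0
  apply Finset.sum_le_sum
  intro j _
  apply mul_le_mul_of_nonneg_left _ (by positivity)
  split_ifs <;> first | linarith | (exfalso; linarith)

lemma f0_nonneg (R : ℝ) (hR : 1 < R) (n : ℕ) (x : ℝ) : 0 ≤ f0 R n x := by
  unfold f0
  apply Finset.sum_nonneg
  intro j _
  split_ifs <;> simp <;> positivity

lemma geo (R y : ℝ) (hR : 1 < R) (hy : 0 ≤ y) (n : ℕ) :
    ∑ j ∈ Finset.range n, (if R ^ j ≤ y then R ^ j else 0) ≤ R / (R - 1) * y := by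
  have hR1 : 0 < R - 1 := by linarith
  induction n with
  | zero => simp; positivity
  | succ n ih =>
    by_cases h : R ^ n ≤ y
    · calc _ ≤ ∑ j ∈ Finset.range (n + 1), R ^ j := by
            apply Finset.sum_le_sum
            intro j _
            split_ifs
            · exact le_rfl
            · positivity
        _ = (R ^ (n + 1) - 1) / (R - 1) := geom_sum_eq hR.ne' _
        _ ≤ R * y / (R - 1) := by
            apply div_le_div_of_nonneg_right _ hR1.le
            rw [pow_succ]; nlinarith
        _ = _ := by ring
    · rw [Finset.sum_range_succ, if_neg h, add_zero]; exact ih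

lemma f0_le (R y : ℝ) (hR : 1 < R) (hy : 0 ≤ y) (n : ℕ) (x : ℝ)
    (h : ∀ j < n, 1 - (1 / 2 : ℝ) ^ j ≤ x → R ^ j ≤ y) : f0 R n x ≤ R / (R - 1) * y := by
  refine le_trans ?_ (geo R y hR hy n)
  unfold f0
  apply Finset.sum_le_sum
  intro j hj
  have := h j (Finset.mem_range.1 hj)
  have hp : 0 ≤ R ^ j := by positivity
  split_ifs <;> simp_all

lemma Rpow (γ : ℝ) (j : ℕ) : ((2:ℝ) ^ γ) ^ j = ((1 / 2 : ℝ) ^ j) ^ (-γ) := by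
  rw [Real.rpow_neg (by positivity), ← Real.inv_rpow (by positivity), ← inv_pow, one_div, inv_inv,
    ← Real.rpow_natCast, ← Real.rpow_mul (by norm_num), ← Real.rpow_natCast 2 j,
    ← Real.rpow_mul (by norm_num), mul_comm]

lemma lowerNorm (α β r γ : ℝ) (hr : 1 ≤ r) (hγ : 0 < γ) (hγβ : 2 * r * γ = 2 * r * β + 1) :
    ∃ C > (0:ℝ), ∀ n : ℕ, 1 ≤ n →
      ∫⁻ x in Icc (-1 : ℝ) 1, ‖jacobi α β x * f0 (2 ^ γ) n x‖ₑ ^ (2 * r) ≤ ENNReal.ofReal (C * n) := by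
  set R : ℝ := 2 ^ γ with hRdef
  have hR : 1 < R := Real.one_lt_rpow (by norm_num) hγ
  have hR1 : 0 < R - 1 := by linarith
  set M := R / (R - 1) with hM
  have hM0 : 0 < M := by positivity
  set s := 2 * r * γ with hs
  have hs0 : 0 < s := by positivity
  refine ⟨(8 ^ |α| * M) ^ (2 * r) * 2 * (1 + 1 / s), by positivity, ?_⟩
  intro n hn
  have hn0 : (1:ℝ) ≤ n := by exact_mod_cast hn
  set θ := 1 / (s * n + 1) with hθ
  have hθ0 : 0 < θ := by positivity
  have hθ1 : θ ≤ 1 := by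
    rw [hθ, div_le_one (by positivity)]
    nlinarith
  set η := s * θ with hη
  have hη0 : 0 < η := by positivity
  have point : ∀ x ∈ Ico (0:ℝ) 1, ‖jacobi α β x * f0 R n x‖ₑ ^ (2 * r) ≤
      ENNReal.ofReal ((8 ^ |α| * M) ^ (2 * r) * 2) * ENNReal.ofReal ((1 - x) ^ (η - 1)) := by
    rintro x ⟨hx0, hx1⟩
    have ht : 0 < 1 - x := by linarith
    set t := 1 - x with htdef
    have hf0 := f0_nonneg R hR n x
    have hw0 := jac_nonneg α β x (by linarith) hx1.le
    have b1 : f0 R n x ≤ M * t ^ (-γ) := by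
      apply f0_le R _ hR (by positivity)
      intro j _ hj
      rw [hRdef, Rpow]
      apply Real.rpow_le_rpow_of_nonpos ht (by linarith) (by linarith)
    have b2 : f0 R n x ≤ M * R ^ n := by
      apply f0_le R _ hR (by positivity)
      intro j hj _
      exact pow_le_pow_right₀ hR.le hj.le
    have hw : jacobi α β x ≤ 8 ^ |α| * t ^ β := by
      have := (rpow_comp 1 (1 + x) α one_pos (by linarith) (by linarith)).2
      rw [Real.one_rpow, mul_one] at this
      unfold jacobi
      rw [← htdef]
      gcongr
    have b3 : f0 R n x ≤ M * ((t ^ (-γ)) ^ (1 - θ) * (R ^ n) ^ θ) := by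
      calc f0 R n x = f0 R n x ^ (1 - θ) * f0 R n x ^ θ := by
            rw [← Real.rpow_add' hf0 (by norm_num)]; simp
        _ ≤ (M * t ^ (-γ)) ^ (1 - θ) * (M * R ^ n) ^ θ := by
            apply mul_le_mul (Real.rpow_le_rpow hf0 b1 (by linarith))
              (Real.rpow_le_rpow hf0 b2 hθ0.le) (by positivity) (by positivity)
        _ = (M ^ (1 - θ) * M ^ θ) * ((t ^ (-γ)) ^ (1 - θ) * (R ^ n) ^ θ) := by
            rw [Real.mul_rpow (by positivity) (by positivity),
              Real.mul_rpow (by positivity) (by positivity)]; ring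
        _ = _ := by rw [← Real.rpow_add hM0]; simp
    rw [enorm_rpow _ _ (by linarith), ← ENNReal.ofReal_mul (by positivity)]
    apply ENNReal.ofReal_le_ofReal
    rw [abs_of_nonneg (by positivity)]
    have b4 : ((R ^ n) ^ θ) ^ (2 * r) ≤ 2 := by
      rw [hRdef, ← Real.rpow_natCast, ← Real.rpow_mul (by positivity), ← Real.rpow_mul (by positivity),
        ← Real.rpow_mul (by positivity)]
      have : γ * (n * (θ * (2 * r))) ≤ 1 := by
        calc γ * (n * (θ * (2 * r))) = s * n / (s * n + 1) := by rw [hθ, hs]; ring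
          _ ≤ 1 := by rw [div_le_one (by positivity)]; linarith
      calc (2:ℝ) ^ (γ * (n * (θ * (2 * r)))) ≤ 2 ^ (1:ℝ) := Real.rpow_le_rpow_of_exponent_le (by norm_num) this
        _ = 2 := by simp
    have b5 : (t ^ β * (t ^ (-γ)) ^ (1 - θ)) ^ (2 * r) = t ^ (η - 1) := by
      rw [← Real.rpow_mul ht.le, ← Real.rpow_add ht, ← Real.rpow_mul ht.le]
      congr 1
      rw [hη, hs]; linear_combination (-1) * hγβ
    calc (jacobi α β x * f0 R n x) ^ (2 * r)
        ≤ ((8 ^ |α| * t ^ β) * (M * ((t ^ (-γ)) ^ (1 - θ) * (R ^ n) ^ θ))) ^ (2 * r) := by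
          apply Real.rpow_le_rpow (by positivity) _ (by linarith)
          exact mul_le_mul hw b3 hf0 (by positivity)
      _ = ((8 ^ |α| * M) * (t ^ β * (t ^ (-γ)) ^ (1 - θ)) * (R ^ n) ^ θ) ^ (2 * r) := by
          congr 1; ring
      _ = (8 ^ |α| * M) ^ (2 * r) * t ^ (η - 1) * ((R ^ n) ^ θ) ^ (2 * r) := by
          rw [Real.mul_rpow (by positivity) (by positivity),
            Real.mul_rpow (by positivity) (by positivity), b5]
      _ ≤ (8 ^ |α| * M) ^ (2 * r) * t ^ (η - 1) * 2 := by gcongr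
      _ = _ := by ring
  have hz : ∫⁻ x in Ico (-1:ℝ) 0, ‖jacobi α β x * f0 R n x‖ₑ ^ (2 * r) = 0 := by
    rw [setLIntegral_congr_fun (g := fun _ => 0) measurableSet_Ico]
    · simp
    · rintro x ⟨_, hx⟩
      have : f0 R n x = 0 := by
        unfold f0
        apply Finset.sum_eq_zero
        intro j _
        rw [if_neg, mul_zero]
        have : (1 / 2 : ℝ) ^ j ≤ 1 := pow_le_one₀ (by norm_num) (by norm_num)
        linarith
      simp only [this, mul_zero, enorm_zero]
      exact ENNReal.zero_rpow_of_pos (by linarith)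
  rw [setLIntegral_congr Ico_ae_eq_Icc.symm]
  have hsub : Ico (-1:ℝ) 1 ⊆ Ico (-1:ℝ) 0 ∪ Ico 0 1 := by
    intro x hx
    rcases lt_or_ge x 0 with h0 | h0
    · exact Or.inl ⟨hx.1, h0⟩
    · exact Or.inr ⟨h0, hx.2⟩
  refine (lintegral_mono_set hsub).trans ((lintegral_union_le _ _ _).trans ?_)
  rw [hz, zero_add]
  refine (setLIntegral_mono' measurableSet_Ico point).trans ?_
  have hlp := lint_pow (η - 1) 1 (by linarith) zero_le_one
  rw [sub_self] at hlp
  rw [lintegral_const_mul' _ _ ENNReal.ofReal_ne_top, hlp, ← ENNReal.ofReal_mul (by positivity)]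
  apply ENNReal.ofReal_le_ofReal
  rw [mul_assoc _ (1 + 1 / s)]
  apply mul_le_mul_of_nonneg_left _ (by positivity)
  rw [Real.one_rpow, sub_add_cancel]
  have : 1 / η = n + 1 / s := by rw [hη, hθ]; field_simp
  rw [this]
  have h1s : 0 < 1 / s := by positivity
  nlinarith

lemma lowerMain (α β r γ δ : ℝ) (hr : 1 ≤ r) (hγ : 0 < γ) (hγβ : 2 * r * γ = 2 * r * β + 1)
    (hδ : 0 < δ) (hδ4 : δ < 1 / 4) (n : ℕ) (hn : ∀ j < n, δ ≤ (1 / 2 : ℝ) ^ j) :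
    ENNReal.ofReal (((KK α β)⁻¹ ^ r / 4) * (δ * n)) ≤
    ∫⁻ x in Icc (-1 + 2 * δ ^ 2) (1 - 2 * δ ^ 2),
      ‖jacobi α β x * symmDelta 1 (δ * phiW x) (f0 (2 ^ γ) n) x‖ₑ ^ r := by
  have hK := KK_pos α β
  set R : ℝ := 2 ^ γ with hRdef
  have hR : 1 < R := Real.one_lt_rpow (by norm_num) hγ
  set E : ℕ → Set ℝ := fun j =>
    Ico (1 - (1 / 2 : ℝ) ^ j - δ * √((1 / 2 : ℝ) ^ j) / 4) (1 - (1 / 2 : ℝ) ^ j) with hE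
  have hsq : ∀ j < n, δ * √((1 / 2 : ℝ) ^ j) ≤ (1 / 2 : ℝ) ^ j := by
    intro j hj
    have h1 : √((1 / 2 : ℝ) ^ j) ≤ 1 := Real.sqrt_le_one.2 (pow_le_one₀ (by norm_num) (by norm_num))
    nlinarith [hn j hj, Real.sqrt_nonneg ((1 / 2 : ℝ) ^ j)]
  have hd1 : ∀ j : ℕ, (1 / 2 : ℝ) ^ j ≤ 1 := fun j => pow_le_one₀ (by norm_num) (by norm_num)
  have hδ2 : 2 * δ ^ 2 ≤ δ / 2 := by nlinarith
  have hs := sum_disj (E := E) (T := Icc (-1 + 2 * δ ^ 2) (1 - 2 * δ ^ 2))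
    (fun k => measurableSet_Ico) (fun x =>
      ‖jacobi α β x * symmDelta 1 (δ * phiW x) (f0 R n) x‖ₑ ^ r) n (by
      intro k hk
      apply Ico_subset_Ico
      · unfold uu; linarith [hsq k hk, show (0:ℝ) < (1 / 2) ^ k by positivity]
      · unfold uu; rw [pow_succ]; linarith) (by
      intro k hk x hx
      have := hsq k hk
      have := hn k hk
      have := hd1 k
      exact ⟨by linarith [hx.1], by linarith [hx.2]⟩)
  refine le_trans ?_ hs
  have each : ∀ j ∈ Finset.range n, ENNReal.ofReal (((KK α β)⁻¹ ^ r / 4) * δ) ≤ ∫⁻ x in E j,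
      ‖jacobi α β x * symmDelta 1 (δ * phiW x) (f0 R n) x‖ₑ ^ r := by
    intro j hj
    have hjn := Finset.mem_range.1 hj
    have q1 := hsq j hjn
    have q2 := hn j hjn
    have q3 := hd1 j
    set d := (1 / 2 : ℝ) ^ j with hd
    have hd0 : 0 < d := by positivity
    have hRj : R ^ j = d ^ (-γ) := by rw [hRdef, Rpow]
    have hval : ((KK α β)⁻¹ ^ r / 4) * δ =
        ((KK α β)⁻¹ * d ^ β * R ^ j) ^ r * ((1 - d) - (1 - d - δ * √d / 4)) := by
      rw [hRj, mul_assoc, ← Real.rpow_add hd0, Real.mul_rpow (by positivity) (by positivity),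
        ← Real.rpow_mul hd0.le, Real.sqrt_eq_rpow]
      have : d ^ ((β + -γ) * r) * d ^ (1 / 2 : ℝ) = 1 := by
        rw [← Real.rpow_add hd0, show (β + -γ) * r + 1 / 2 = 0 by linear_combination (-1/2) * hγβ,
          Real.rpow_zero]
      linear_combination (-(KK α β)⁻¹ ^ r * δ / 4) * this
    rw [hval]
    apply const_le (by positivity) _ le_rfl
    rintro x ⟨hx1, hx2⟩
    have hx3 : -1 / 4 ≤ x := by linarith
    have hp := phi_bound (h := δ) (x := x) hδ (abs_le.2 ⟨by linarith, by linarith⟩)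
    have hax := le_abs_self x
    have hax2 := neg_abs_le x
    have hphi : √d / 2 ≤ phiW x := by
      unfold phiW
      rw [show √d / 2 = √(d / 4) by
        rw [Real.sqrt_div hd0.le, show (4:ℝ) = 2 ^ 2 by norm_num, Real.sqrt_sq (by norm_num)]]
      apply Real.sqrt_le_sqrt
      nlinarith
    have hphi2 : δ * √d / 4 ≤ δ * phiW x / 2 := by nlinarith
    have hphi0 : 0 ≤ phiW x := Real.sqrt_nonneg _
    have hhp : 0 ≤ δ * phiW x := by positivity
    have hw0 := jac_nonneg α β x (by linarith) (by linarith)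
    have hw := (jac_comp α β d x hd0 (by linarith) (by linarith) (by linarith) (by linarith)).1
    rw [symm1, if_pos ⟨⟨by linarith, by linarith⟩, ⟨by linarith, by linarith⟩⟩,
      enorm_rpow _ _ (by linarith)]
    apply ENNReal.ofReal_le_ofReal
    apply Real.rpow_le_rpow (by positivity) _ (by linarith)
    have hjump : R ^ j ≤ f0 R n (x + δ * phiW x / 2) - f0 R n (x - δ * phiW x / 2) := by
      unfold f0
      rw [← Finset.sum_sub_distrib]
      have hle := Finset.single_le_sum (s := Finset.range n) (a := j)
        (f := fun i => R ^ i * (if 1 - (1 / 2 : ℝ) ^ i ≤ x + δ * phiW x / 2 then 1 else 0) -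
          R ^ i * (if 1 - (1 / 2 : ℝ) ^ i ≤ x - δ * phiW x / 2 then (1:ℝ) else 0)) (by
          intro i _
          rw [← mul_sub]
          apply mul_nonneg (by positivity)
          split_ifs <;> first | linarith | (exfalso; linarith)) hj
      refine le_trans (le_of_eq ?_) hle
      rw [if_pos (by linarith), if_neg (by linarith)]
      ring
    have hRp : 0 < R ^ j := by positivity
    rw [abs_of_nonneg (mul_nonneg hw0 (by linarith))]
    exact mul_le_mul hw hjump hRp.le hw0
  have hcs := Finset.card_nsmul_le_sum _ _ _ each
  refine le_trans (le_of_eq ?_) hcs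
  rw [Finset.card_range, nsmul_eq_mul, ← ENNReal.ofReal_natCast, ← ENNReal.ofReal_mul (by positivity)]
  congr 1; ring

lemma lower (q : ℝ≥0∞) (hq1 : 1 ≤ q) (hq2 : q ≠ ∞) (α β : ℝ)
    (hβ : -1 / (2 * q.toReal) < β) :
    ∃ C > (0:ℝ), ∀ δ : ℝ, 0 < δ → δ < 1 / 4 → ∃ f ∈ BSet (2 * q) α β ∩ MSet 1,
      ENNReal.ofReal (C * δ ^ (1 / q.toReal) * |Real.log δ| ^ (1 / (2 * q.toReal))) ≤
      omegaDT 1 f δ (jacobi α β) q := by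
  have hK := KK_pos α β
  have hq0 : q ≠ 0 := by rintro rfl; simp at hq1
  set r := q.toReal with hrdef
  have hr : 1 ≤ r := by
    have := ENNReal.toReal_mono hq2 hq1
    simpa using this
  have h2q0 : 2 * q ≠ 0 := mul_ne_zero (by norm_num) hq0
  have h2q : 2 * q ≠ ∞ := ENNReal.mul_ne_top (by norm_num) hq2
  have h2r : (2 * q).toReal = 2 * r := by rw [ENNReal.toReal_mul]; rfl
  set γ := β + 1 / (2 * r) with hγdef
  have hγ : 0 < γ := by
    have : -1 / (2 * r) = -(1 / (2 * r)) := by ring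
    rw [hγdef]; linarith
  have hγβ : 2 * r * γ = 2 * r * β + 1 := by rw [hγdef]; field_simp
  have hR : (1:ℝ) < 2 ^ γ := Real.one_lt_rpow (by norm_num) hγ
  obtain ⟨C4, hC4, hnorm⟩ := lowerNorm α β r γ hr hγ hγβ
  set c5 := (KK α β)⁻¹ ^ r / 4 with hc5
  have hc50 : 0 < c5 := by positivity
  refine ⟨c5 ^ (1 / r) / C4 ^ (1 / (2 * r)), by positivity, ?_⟩
  intro δ hδ hδ4
  obtain ⟨m, hm1, hm2⟩ := exists_nat_pow_near_of_lt_one (x := δ) (y := 1 / 2)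
    hδ (by linarith) (by norm_num) (by norm_num)
  set n := m + 1 with hn
  have hn1 : (1:ℝ) ≤ n := by rw [hn]; push_cast; linarith [Nat.cast_nonneg (α := ℝ) m]
  have hlogn : |Real.log δ| ≤ n := by
    have h1 := Real.log_le_log (by positivity) hm1.le
    rw [Real.log_pow, one_div, Real.log_inv] at h1
    have hl2 : Real.log 2 ≤ 1 := by linarith [Real.log_two_lt_d9]
    have : Real.log δ ≤ 0 := Real.log_nonpos hδ.le (by linarith)
    rw [abs_of_nonpos this]
    nlinarith
  set F := f0 (2 ^ γ) n with hF
  have hFm : Monotone F := f0_mono _ hR n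
  have hNle := hnorm n (by omega)
  have hLow := lowerMain α β r γ δ hr hγ hγβ hδ hδ4 n (by
    intro j hj
    exact hm2.trans (pow_le_pow_of_le_one (by norm_num) (by norm_num) (by omega)))
  rw [← hF] at hNle hLow
  have hNpos : ENNReal.ofReal (((KK α β)⁻¹) ^ (2 * r) * (1 / 2 - 0)) ≤
      ∫⁻ x in Icc (-1 : ℝ) 1, ‖jacobi α β x * F x‖ₑ ^ (2 * r) := by
    apply const_le (by positivity)
    · rintro x ⟨hx0, hx1⟩
      rw [enorm_rpow _ _ (by linarith)]
      apply ENNReal.ofReal_le_ofReal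
      apply Real.rpow_le_rpow (by positivity) _ (by linarith)
      have hw := (jac_comp α β 1 x one_pos (by linarith) (by linarith) (by linarith) (by linarith)).1
      rw [Real.one_rpow, mul_one] at hw
      have hF1 : 1 ≤ F x := by
        rw [hF]; unfold f0
        rw [Finset.sum_range_succ']
        have : 0 ≤ ∑ k ∈ Finset.range m, ((2:ℝ) ^ γ) ^ (k + 1) *
            (if 1 - (1 / 2 : ℝ) ^ (k + 1) ≤ x then (1:ℝ) else 0) := by
          apply Finset.sum_nonneg
          intro k _
          split_ifs <;> simp <;> positivity
        simp only [pow_zero, sub_self, if_pos hx0]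
        linarith
      rw [abs_mul, abs_of_nonneg (jac_nonneg α β x (by linarith) (by linarith)),
        abs_of_nonneg (by linarith)]
      have := inv_pos.2 hK
      nlinarith
    · intro x hx; exact ⟨by linarith [hx.1], by linarith [hx.2]⟩
  set N := LpOn (fun x => jacobi α β x * F x) (2 * q) (-1) 1 with hN
  have hNeq : N = (∫⁻ x in Icc (-1 : ℝ) 1, ‖jacobi α β x * F x‖ₑ ^ (2 * r)) ^ (1 / (2 * r)) := by
    rw [hN]; unfold LpOn
    rw [eLpNorm_eq_lintegral_rpow_enorm_toReal h2q0 h2q, h2r]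
  have hNub : N ≤ ENNReal.ofReal ((C4 * n) ^ (1 / (2 * r))) := by
    rw [hNeq, ← ENNReal.ofReal_rpow_of_nonneg (by positivity) (by positivity)]
    exact ENNReal.rpow_le_rpow hNle (by positivity)
  have hNtop : N ≠ ∞ := ne_top_of_le_ne_top ENNReal.ofReal_ne_top hNub
  have hN0 : N ≠ 0 := by
    rw [hNeq]
    intro h0
    rw [ENNReal.rpow_eq_zero_iff_of_pos (by positivity)] at h0
    rw [h0] at hNpos
    have : 0 < ((KK α β)⁻¹) ^ (2 * r) * (1 / 2 - 0) := by positivity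
    have h3 := ENNReal.ofReal_pos.2 this
    exact absurd hNpos (not_le.2 h3)
  set ν := N.toReal with hν
  have hν0 : 0 < ν := ENNReal.toReal_pos hN0 hNtop
  have hνN : ENNReal.ofReal ν = N := ENNReal.ofReal_toReal hNtop
  have hνub : ν ≤ (C4 * n) ^ (1 / (2 * r)) := ENNReal.toReal_le_of_le_ofReal (by positivity) hNub
  have hen : ‖ν⁻¹‖ₑ = N⁻¹ := by
    rw [Real.enorm_eq_ofReal_abs, abs_of_pos (by positivity), ENNReal.ofReal_inv_of_pos hν0, hνN]
  have hLp : ∀ (g : ℝ → ℝ) (p : ℝ≥0∞) (a b : ℝ),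
      LpOn (fun x => ν⁻¹ * g x) p a b = N⁻¹ * LpOn g p a b := by
    intro g p a b
    unfold LpOn
    rw [← hen, ← eLpNorm_const_smul]
    rfl
  refine ⟨fun x => ν⁻¹ * F x, ⟨⟨hFm.measurable.const_mul _, ?_⟩, ?_⟩, ?_⟩
  · have : (fun x => jacobi α β x * (ν⁻¹ * F x)) = fun x => ν⁻¹ * (jacobi α β x * F x) := by
      funext x; ring
    rw [this, hLp, ← hN]
    exact ENNReal.inv_mul_cancel hN0 hNtop
  · exact kmono_of (fun x y h => mul_le_mul_of_nonneg_left (hFm h) (by positivity))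
  · have step : N⁻¹ * ENNReal.ofReal ((c5 * (δ * n)) ^ (1 / r)) ≤
        omegaDT 1 (fun x => ν⁻¹ * F x) δ (jacobi α β) q := by
      unfold omegaDT
      rw [add_assoc]
      refine le_trans ?_ le_self_add
      unfold OmegaMain
      refine le_trans ?_ (le_iSup₂ (f := fun h (_ : h ∈ Ioc (0:ℝ) δ) => LpOn (fun x =>
        jacobi α β x * symmDelta 1 (h * phiW x) (fun x => ν⁻¹ * F x) x) q
      (-1 + 2 * ((1:ℕ) : ℝ) ^ 2 * h ^ 2) (1 - 2 * ((1:ℕ) : ℝ) ^ 2 * h ^ 2)) δ ⟨hδ, le_rfl⟩)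
      simp only [Nat.cast_one, one_pow, mul_one]
      have : (fun x => jacobi α β x * symmDelta 1 (δ * phiW x) (fun x => ν⁻¹ * F x) x) =
          fun x => ν⁻¹ * (jacobi α β x * symmDelta 1 (δ * phiW x) F x) := by
        funext x
        rw [symm1, symm1]
        split_ifs <;> ring
      rw [this, hLp]
      gcongr
      unfold LpOn
      rw [eLpNorm_eq_lintegral_rpow_enorm_toReal hq0 hq2,
        ← ENNReal.ofReal_rpow_of_nonneg (by positivity) (by positivity)]
      exact ENNReal.rpow_le_rpow hLow (by positivity)
    refine le_trans ?_ step
    rw [← hνN, ← ENNReal.ofReal_inv_of_pos hν0, ← ENNReal.ofReal_mul (by positivity)]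
    apply ENNReal.ofReal_le_ofReal
    have hnn : (0:ℝ) < n := by linarith
    calc c5 ^ (1 / r) / C4 ^ (1 / (2 * r)) * δ ^ (1 / r) * |Real.log δ| ^ (1 / (2 * r))
        ≤ c5 ^ (1 / r) / C4 ^ (1 / (2 * r)) * δ ^ (1 / r) * (n:ℝ) ^ (1 / (2 * r)) := by gcongr
      _ = ((C4 * n) ^ (1 / (2 * r)))⁻¹ * (c5 * (δ * n)) ^ (1 / r) := by
          rw [Real.mul_rpow hC4.le hnn.le, Real.mul_rpow hc50.le (by positivity),
            Real.mul_rpow hδ.le hnn.le]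
          have : (n:ℝ) ^ (1 / r) = (n:ℝ) ^ (1 / (2 * r)) * (n:ℝ) ^ (1 / (2 * r)) := by
            rw [← Real.rpow_add hnn]; congr 1; field_simp; norm_num
          rw [this]
          field_simp
      _ ≤ _ := by
          gcongr


theorem statement4 (q : ℝ≥0∞) (hq1 : 1 ≤ q) (hq2 : q ≠ ∞)
    (α β : ℝ) (hα : α ∈ Jset (2 * q)) (hβ : β ∈ Jset (2 * q)) (lam : ℝ) (hlam : 1 < lam) :
    ∃ c₁ > (0 : ℝ), ∃ c₂ > (0 : ℝ), ∀ δ : ℝ, 0 < δ → δ < 1 / 4 →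
      ENNReal.ofReal (c₁ * δ ^ (1 / q.toReal) * |Real.log δ| ^ (1 / (2 * q.toReal)) /
          (abs (Real.log |Real.log δ|)) ^ (lam / (2 * q.toReal))) ≤
        (⨆ f ∈ BSet (2 * q) α β ∩ MSet 1, omegaDT 1 f δ (jacobi α β) q) ∧
      (⨆ f ∈ BSet (2 * q) α β ∩ MSet 1, omegaDT 1 f δ (jacobi α β) q) ≤
        ENNReal.ofReal (c₂ * δ ^ (1 / q.toReal) * |Real.log δ| ^ (1 / (2 * q.toReal))) := by
  have hq0 : q ≠ 0 := by rintro rfl; simp at hq1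
  have h2q0 : 2 * q ≠ 0 := mul_ne_zero (by norm_num) hq0
  have h2q : 2 * q ≠ ∞ := ENNReal.mul_ne_top (by norm_num) hq2
  have h2r : (2 * q).toReal = 2 * q.toReal := by rw [ENNReal.toReal_mul]; rfl
  have hr : 1 ≤ q.toReal := by
    have := ENNReal.toReal_mono hq2 hq1
    simpa using this
  unfold Jset at hα hβ
  rw [if_neg h2q, h2r] at hα hβ
  obtain ⟨C, hC, hup⟩ := upper q hq1 hq2 α β hα hβ
  obtain ⟨c, hc, hlo⟩ := lower q hq1 hq2 α β hβ
  have hl : 0 < Real.log 1.38 := Real.log_pos (by norm_num)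
  refine ⟨c * Real.log 1.38 ^ (lam / (2 * q.toReal)), by positivity, C, hC, ?_⟩
  intro δ hδ hδ4
  constructor
  · obtain ⟨f, hf, hle⟩ := hlo δ hδ hδ4
    refine le_trans (le_trans ?_ hle) (le_iSup₂ (f := fun f (_ : f ∈ BSet (2 * q) α β ∩ MSet 1) =>
      omegaDT 1 f δ (jacobi α β) q) f hf)
    apply ENNReal.ofReal_le_ofReal
    have hlog : Real.log δ ≤ -1.38 := by
      have : Real.log δ ≤ Real.log (1/4) := Real.log_le_log hδ hδ4.le
      rw [show (1/4:ℝ) = (2^2)⁻¹ by norm_num, Real.log_inv, Real.log_pow] at this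
      have := Real.log_two_gt_d9
      push_cast at *
      linarith
    have hL : 1.38 ≤ |Real.log δ| := by rw [abs_of_nonpos (by linarith)]; linarith
    have hll : Real.log 1.38 ≤ (abs (Real.log |Real.log δ|)) :=
      (Real.log_le_log (by norm_num) hL).trans (le_abs_self _)
    have hP : Real.log 1.38 ^ (lam / (2 * q.toReal)) ≤
        (abs (Real.log |Real.log δ|)) ^ (lam / (2 * q.toReal)) :=
      Real.rpow_le_rpow hl.le hll (by positivity)
    have hP0 : 0 < Real.log 1.38 ^ (lam / (2 * q.toReal)) := by positivity
    rw [div_le_iff₀ (lt_of_lt_of_le hP0 hP)]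
    have hX : 0 ≤ c * δ ^ (1 / q.toReal) * |Real.log δ| ^ (1 / (2 * q.toReal)) := by positivity
    calc _ = c * δ ^ (1 / q.toReal) * |Real.log δ| ^ (1 / (2 * q.toReal)) *
          Real.log 1.38 ^ (lam / (2 * q.toReal)) := by ring
      _ ≤ _ := mul_le_mul_of_nonneg_left hP hX
  · refine iSup₂_le ?_
    rintro f ⟨⟨hfm, hfn⟩, hfk⟩
    apply hup δ hδ hδ4 f hfm (kmono_iff hfk)
    unfold LpOn at hfn
    rw [eLpNorm_eq_lintegral_rpow_enorm_toReal h2q0 h2q, h2r] at hfn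
    have := congrArg (fun z : ℝ≥0∞ => z ^ (2 * q.toReal)) hfn
    simp only [ENNReal.one_rpow, ← ENNReal.rpow_mul] at this
    rwa [one_div, inv_mul_cancel₀ (by positivity), ENNReal.rpow_one] at this
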